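/- Let (Ω, P) be a probability space and let X₁, X₂ : Ω → ℝ be independent random variables such that E[X₁²] ≤ 1 (and X₁² is integrable). Then the expected payoff of player 1 in the bias-variance game is non-negative: E[(1 − X₁²)·𝟙{|X₁| < |X₂|} + (1/2)·(1 − X₁²)·𝟙{|X₁| = |X₂|}] ≥ 0. -/

import Mathlib

/-!
Winning is less likely the larger one's own squared realization `x` is, while the prize `1 - x`
changes sign from positive to negative at `x = 1`. Hence replacing the own realization by `1` when
computing the probability of winning can only lower the payoff. After this replacement the
probability of winning depends on the opponent alone, so by independence the expected payoff is at
least `E[1 - X₁²]` times a nonnegative number.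
-/

open MeasureTheory ProbabilityTheory

lemma mul_le_mul_of_antitone_of_sign_change {α R : Type*} [LinearOrder α] [Ring R]
    [PartialOrder R] [IsOrderedRing R] {u w : α → R} {c : α} (hw : Antitone w)
    (hu_nonneg : ∀ x ≤ c, 0 ≤ u x) (hu_nonpos : ∀ x ≥ c, u x ≤ 0) (x : α) :
    u x * w c ≤ u x * w x := by
  rcases le_total x c with hxc | hcx
  · exact mul_le_mul_of_nonneg_left (hw hxc) (hu_nonneg x hxc)
  · exact mul_le_mul_of_nonpos_left (hw hcx) (hu_nonpos x hcx)

theorem integral_mul_integral_le_integral_mul_of_sign_change {Ω α β : Type*} [MeasurableSpace Ω]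
    {P : Measure Ω} [LinearOrder α] [MeasurableSpace α] [MeasurableSpace β]
    {X : Ω → α} {Y : Ω → β} {u : α → ℝ} {w : α → β → ℝ} {c : α} {C : ℝ}
    (hX : AEMeasurable X P) (hY : AEMeasurable Y P) (hXY : IndepFun X Y P)
    (hu : Measurable u) (hu_int : Integrable (fun ω => u (X ω)) P)
    (hu_nonneg : ∀ x ≤ c, 0 ≤ u x) (hu_nonpos : ∀ x ≥ c, u x ≤ 0)
    (hw : Measurable (Function.uncurry w)) (hw_anti : ∀ y, Antitone fun x => w x y)
    (hw_bdd : ∀ x y, ‖w x y‖ ≤ C) :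
    (∫ ω, u (X ω) ∂P) * ∫ ω, w c (Y ω) ∂P ≤ ∫ ω, u (X ω) * w (X ω) (Y ω) ∂P := by
  have hwc : Measurable (w c) := hw.of_uncurry_left
  have hwcY : AEStronglyMeasurable (fun ω => w c (Y ω)) P :=
    (hwc.comp_aemeasurable hY).aestronglyMeasurable
  have hwXY : AEStronglyMeasurable (fun ω => w (X ω) (Y ω)) P :=
    (hw.comp_aemeasurable (hX.prodMk hY)).aestronglyMeasurable
  calc (∫ ω, u (X ω) ∂P) * ∫ ω, w c (Y ω) ∂P
      = ∫ ω, u (X ω) * w c (Y ω) ∂P :=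
        ((hXY.comp hu hwc).integral_fun_mul_eq_mul_integral
          hu_int.aestronglyMeasurable hwcY).symm
    _ ≤ ∫ ω, u (X ω) * w (X ω) (Y ω) ∂P :=
        integral_mono (hu_int.mul_bdd hwcY (ae_of_all _ fun ω => hw_bdd c (Y ω)))
          (hu_int.mul_bdd hwXY (ae_of_all _ fun ω => hw_bdd (X ω) (Y ω)))
          fun ω => mul_le_mul_of_antitone_of_sign_change (hw_anti (Y ω)) hu_nonneg hu_nonpos (X ω)

/-- The probability that a player with score `x` wins against an opponent with score `y`, when the
smaller score wins and ties are broken by a fair coin. -/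
noncomputable def winProb {α : Type*} [LinearOrder α] (x y : α) : ℝ :=
  if x < y then 1 else if x = y then 1 / 2 else 0

namespace winProb

variable {α : Type*} [LinearOrder α]

lemma of_lt {x y : α} (h : x < y) : winProb x y = 1 := if_pos h

lemma self (x : α) : winProb x x = 1 / 2 := by
  simp [winProb]

lemma of_gt {x y : α} (h : y < x) : winProb x y = 0 := by
  simp [winProb, h.not_gt, h.ne']

lemma nonneg (x y : α) : 0 ≤ winProb x y := by
  unfold winProb
  split_ifs <;> norm_num

lemma le_one (x y : α) : winProb x y ≤ 1 := by
  unfold winProb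
  split_ifs <;> norm_num

lemma norm_le_one (x y : α) : ‖winProb x y‖ ≤ 1 := by
  simpa [abs_of_nonneg (nonneg x y)] using le_one x y

lemma antitone_left (y : α) : Antitone fun x => winProb x y := by
  intro x x' hxx'
  rcases lt_trichotomy x' y with hlt | rfl | hgt
  · simp only [of_lt hlt, of_lt (hxx'.trans_lt hlt), le_refl]
  · rcases hxx'.eq_or_lt with rfl | hlt
    · exact le_rfl
    · norm_num [self, of_lt hlt]
  · simpa only [of_gt hgt] using nonneg x y

lemma measurable_uncurry [TopologicalSpace α] [OrderClosedTopology α] [SecondCountableTopology α]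
    [MeasurableSpace α] [OpensMeasurableSpace α] :
    Measurable (Function.uncurry (winProb (α := α))) :=
  Measurable.ite (measurableSet_lt measurable_fst measurable_snd) measurable_const <|
    Measurable.ite (measurableSet_eq_fun measurable_fst measurable_snd) measurable_const
      measurable_const

lemma mul_eq_add (s : ℝ) (x y : α) :
    s * winProb x y =
      s * (if x < y then 1 else 0) + (1 / 2) * s * (if x = y then 1 else 0) := by
  rcases lt_trichotomy x y with hlt | rfl | hgt
  · simp [of_lt hlt, hlt, hlt.ne]
  · simp [self, mul_comm]
  · simp [of_gt hgt, hgt.not_gt, hgt.ne']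

end winProb

theorem bias_variance_game_individually_rational_general {Ω : Type*} [MeasurableSpace Ω]
    {P : Measure Ω} [IsProbabilityMeasure P] {L₁ L₂ : Ω → ℝ} {v : ℝ}
    (hL₂ : AEMeasurable L₂ P) (hindep : IndepFun L₁ L₂ P) (hint : Integrable L₁ P)
    (hIR : ∫ ω, L₁ ω ∂P ≤ v) :
    0 ≤ ∫ ω, (v - L₁ ω) * winProb (L₁ ω) (L₂ ω) ∂P := by
  have hprize : 0 ≤ ∫ ω, (v - L₁ ω) ∂P := by
    rw [integral_sub (integrable_const v) hint]
    simpa using hIR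
  calc 0 ≤ (∫ ω, (v - L₁ ω) ∂P) * ∫ ω, winProb v (L₂ ω) ∂P :=
        mul_nonneg hprize (integral_nonneg fun ω => winProb.nonneg v (L₂ ω))
    _ ≤ ∫ ω, (v - L₁ ω) * winProb (L₁ ω) (L₂ ω) ∂P :=
        integral_mul_integral_le_integral_mul_of_sign_change (u := fun x => v - x)
          hint.aemeasurable hL₂ hindep (by fun_prop) ((integrable_const v).sub hint)
          (fun _ => sub_nonneg.mpr) (fun _ => sub_nonpos.mpr)
          winProb.measurable_uncurry winProb.antitone_left winProb.norm_le_one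

theorem bias_variance_game_individually_rational
    {Ω : Type*} [MeasurableSpace Ω] (P : Measure Ω) [IsProbabilityMeasure P]
    (X₁ X₂ : Ω → ℝ) (hX₁ : Measurable X₁) (hX₂ : Measurable X₂)
    (hindep : IndepFun X₁ X₂ P)
    (hint : Integrable (fun ω => (X₁ ω)^2) P)
    (hIR : ∫ ω, (X₁ ω)^2 ∂P ≤ 1) :
    0 ≤ ∫ ω, ((1 - (X₁ ω)^2) * (if |X₁ ω| < |X₂ ω| then 1 else 0)
        + (1/2) * (1 - (X₁ ω)^2) * (if |X₁ ω| = |X₂ ω| then 1 else 0)) ∂P := by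
  have hsq : Measurable fun x : ℝ => x ^ 2 := by fun_prop
  simpa only [winProb.mul_eq_add, Function.comp_apply, sq_lt_sq, sq_eq_sq_iff_abs_eq_abs] using
    bias_variance_game_individually_rational_general
      (hsq.comp hX₂).aemeasurable (hindep.comp hsq hsq) hint hIR
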